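/- arXiv:1609.05544 — 2 statements merged into one kernel-verified Lean document; each statement's English description precedes it below -/
import Mathlib

section
/- Let φ : [0,∞) → ℝ be a differentiable function with φ(0) < 1 satisfying φ′(t) = −1/(1−φ(t))² for all t ≥ 0 (in particular φ(t) ≠ 1 for all t). Then φ(t) → −∞ as t → ∞, and consequently e(t) := 1/(1−φ(t)) satisfies lim_{t→∞} e(t) = 0. -/
open Filter Topology

/-- for the scalar adaptive error ODE `φ′(t) = -1/(1-φ(t))²` with
`φ(0) < 1` (in particular `φ(t) ≠ 1` for all `t ≥ 0`), the parameter error `φ` diverges to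
`-∞` and the adaptation error `e(t) = 1/(1-φ(t))` converges to `0`. -/
theorem destabilizing_perturbation_integer_case
    (φ : ℝ → ℝ) (hdiff : Differentiable ℝ φ) (h0 : φ 0 < 1)
    (hne : ∀ t ≥ (0:ℝ), φ t ≠ 1)
    (hode : ∀ t ≥ (0:ℝ), deriv φ t = -1 / (1 - φ t) ^ 2) :
    Tendsto φ atTop atBot ∧ Tendsto (fun t => 1 / (1 - φ t)) atTop (𝓝 0) := by
  have hd : ∀ t ≥ (0:ℝ), HasDerivAt (fun t => (1 - φ t) ^ 3 - 3 * t) 0 t := by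
    intro t ht
    have h1 := (hdiff t).hasDerivAt
    rw [hode t ht] at h1
    have h2 := ((h1.const_sub 1).pow 3).sub ((hasDerivAt_id t).const_mul 3)
    refine h2.congr_deriv ?_
    have h3 : 1 - φ t ≠ 0 := sub_ne_zero.mpr (hne t ht).symm
    field_simp
    norm_num
    ring
  have hc : ∀ t ≥ (0:ℝ), (1 - φ t) ^ 3 = (1 - φ 0) ^ 3 + 3 * t := by
    intro t ht
    have h := constant_of_has_deriv_right_zero (f := fun t => (1 - φ t) ^ 3 - 3 * t)
      (a := 0) (b := t) (fun x hx => (hd x hx.1).continuousAt.continuousWithinAt)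
      (fun x hx => (hd x hx.1).hasDerivWithinAt) t ⟨ht, le_rfl⟩
    simp only [mul_zero, sub_zero] at h
    linarith
  have hT : Tendsto (fun t => 1 - φ t) atTop atTop := by
    rw [tendsto_atTop]
    intro M
    filter_upwards [eventually_ge_atTop (0:ℝ),
      eventually_ge_atTop ((M ^ 3 - (1 - φ 0) ^ 3) / 3)] with t ht htM
    have h := hc t ht
    have h3 : Odd 3 := by decide
    refine h3.pow_le_pow.mp ?_
    linarith
  constructor
  · have h := tendsto_atBot_add_const_left atTop (1:ℝ) (tendsto_neg_atTop_atBot.comp hT)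
    refine h.congr fun t => ?_
    simp
  · simpa only [one_div, Function.comp_def] using tendsto_inv_atTop_zero.comp hT
end

section
/- Let α ∈ (0,1) and let E_α(z) = ∑_{k≥0} z^k/Γ(αk+1) be the Mittag-Leffler function. Then there exist real numbers 0 < s < t such that E_α(t^α) ≠ E_α(s^α) · E_α((t−s)^α); that is, the one-parameter family t ↦ E_α(t^α) does not satisfy the semigroup (flow) property satisfied by the exponential when α = 1. -/
open Filter Topology

noncomputable section

/-- Scalar Mittag-Leffler function `E_α(z) = ∑_{k≥0} z^k / Γ(αk+1)`. -/
def mlE (α z : ℝ) : ℝ := ∑' k : ℕ, z ^ k / Real.Gamma (α * k + 1)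

lemma ml_gamma_lower : ∃ M : ℝ, 0 < M ∧ ∀ x : ℝ, 1 ≤ x → 1 / Real.Gamma x ≤ M := by
  have hc : ContinuousOn Real.Gamma (Set.Icc (1:ℝ) 2) := by
    intro x hx
    apply ContinuousAt.continuousWithinAt
    apply (Real.differentiableAt_Gamma _).continuousAt
    intro m hm
    have h0 : (0:ℝ) ≤ m := Nat.cast_nonneg m
    have := hx.1
    linarith
  obtain ⟨y, hy, hmin⟩ := isCompact_Icc.exists_isMinOn (Set.nonempty_Icc.2 (by norm_num)) hc
  have hy0 : 0 < Real.Gamma y := Real.Gamma_pos_of_pos (by linarith [hy.1])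
  refine ⟨1 / Real.Gamma y + 1, by positivity, fun x hx => ?_⟩
  rcases le_total x 2 with h | h
  · have h1 : Real.Gamma y ≤ Real.Gamma x := hmin ⟨hx, h⟩
    have := one_div_le_one_div_of_le hy0 h1
    linarith
  · have h1 : Real.Gamma 2 ≤ Real.Gamma x :=
      Real.Gamma_strictMonoOn_Ici.monotoneOn (Set.mem_Ici.2 le_rfl) (Set.mem_Ici.2 h) h
    rw [Real.Gamma_two] at h1
    have := one_div_le_one_div_of_le one_pos h1
    have h2 : 0 < 1 / Real.Gamma y := by positivity
    linarith

lemma ml_bounds (α : ℝ) (h0 : 0 < α) (M : ℝ)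
    (hM : ∀ x : ℝ, 1 ≤ x → 1 / Real.Gamma x ≤ M) (z : ℝ) (hz : 0 ≤ z) (hz' : z ≤ 1 / 2) :
    1 + z / Real.Gamma (α + 1) ≤ mlE α z ∧
    mlE α z ≤ 1 + z / Real.Gamma (α + 1) + 2 * M * z ^ 2 := by
  have hge : ∀ k : ℕ, 1 ≤ α * k + 1 := fun k => by
    have : 0 ≤ α * k := by positivity
    linarith
  have hpos : ∀ k : ℕ, 0 < Real.Gamma (α * k + 1) := fun k =>
    Real.Gamma_pos_of_pos (by linarith [hge k])
  have hle : ∀ k : ℕ, z ^ k / Real.Gamma (α * k + 1) ≤ M * z ^ k := fun k => by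
    have := mul_le_mul_of_nonneg_left (hM _ (hge k)) (pow_nonneg hz k)
    rw [mul_one_div] at this
    linarith
  have hnn : ∀ k : ℕ, 0 ≤ z ^ k / Real.Gamma (α * k + 1) := fun k =>
    div_nonneg (pow_nonneg hz k) (hpos k).le
  have hg : Summable (fun k : ℕ => z ^ k) := summable_geometric_of_lt_one hz (by linarith)
  have hs : Summable (fun k : ℕ => z ^ k / Real.Gamma (α * k + 1)) :=
    Summable.of_nonneg_of_le hnn hle (hg.mul_left M)
  have hM0 : 0 ≤ M := le_trans (by simp) (hM 1 le_rfl)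
  have key := hs.sum_add_tsum_nat_add 2
  have hE : mlE α z = 1 + z / Real.Gamma (α + 1) +
      ∑' k : ℕ, z ^ (k + 2) / Real.Gamma (α * ((k + 2 : ℕ) : ℝ) + 1) := by
    unfold mlE
    rw [← key]
    simp [Finset.sum_range_succ]
  rw [hE]
  constructor
  · have : 0 ≤ ∑' k : ℕ, z ^ (k + 2) / Real.Gamma (α * ((k + 2 : ℕ) : ℝ) + 1) :=
      tsum_nonneg fun k => hnn (k + 2)
    linarith
  · have h1 : ∑' k : ℕ, z ^ (k + 2) / Real.Gamma (α * ((k + 2 : ℕ) : ℝ) + 1)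
        ≤ ∑' k : ℕ, M * z ^ 2 * z ^ k := by
      apply Summable.tsum_le_tsum _ ((summable_nat_add_iff 2).2 hs) (hg.mul_left _)
      intro k
      refine (hle (k + 2)).trans (le_of_eq ?_)
      ring
    rw [tsum_mul_left, tsum_geometric_of_lt_one hz (by linarith)] at h1
    have h2 : (1 - z)⁻¹ ≤ 2 := by
      rw [inv_le_comm₀ (by linarith) (by norm_num)]
      linarith
    have h3 := mul_le_mul_of_nonneg_left h2 (show 0 ≤ M * z ^ 2 by positivity)
    linarith

/-- for `α ∈ (0,1)` the family `t ↦ E_α(t^α)` fails the semigroup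
property: there are `0 < s < t` with `E_α(t^α) ≠ E_α(s^α) · E_α((t-s)^α)`. -/
theorem mittagLeffler_no_semigroup_property
    (α : ℝ) (hα : α ∈ Set.Ioo (0:ℝ) 1) :
    ∃ s t : ℝ, 0 < s ∧ s < t ∧
      mlE α (t ^ α) ≠ mlE α (s ^ α) * mlE α ((t - s) ^ α) := by
  obtain ⟨h0, h1⟩ := hα
  obtain ⟨M, hM0, hM⟩ := ml_gamma_lower
  have hr2 : (2:ℝ) ^ α < 2 := by
    have := Real.rpow_lt_rpow_of_exponent_lt (x := 2) (by norm_num) h1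
    rwa [Real.rpow_one] at this
  have hr0 : 0 < (2:ℝ) ^ α := by positivity
  set r := (2:ℝ) ^ α with hr
  have hG : 0 < Real.Gamma (α + 1) := Real.Gamma_pos_of_pos (by linarith)
  set c := 1 / Real.Gamma (α + 1) with hc
  have hc0 : 0 < c := by positivity
  have hd : 0 < (2 - r) * c := mul_pos (by linarith) hc0
  set x := min (1 / 4) ((2 - r) * c / (16 * M)) with hx
  have hx0 : 0 < x := lt_min (by norm_num) (by positivity)
  have hx4 : x ≤ 1 / 4 := min_le_left _ _
  have hxd : x * (16 * M) ≤ (2 - r) * c := by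
    rw [← le_div_iff₀ (by positivity)]
    exact min_le_right _ _
  have hs0 : 0 < x ^ (1 / α) := by positivity
  refine ⟨x ^ (1 / α), 2 * x ^ (1 / α), hs0, by linarith, ?_⟩
  have e1 : (x ^ (1 / α)) ^ α = x := by
    rw [← Real.rpow_mul hx0.le, one_div_mul_cancel h0.ne', Real.rpow_one]
  rw [Real.mul_rpow (by norm_num) hs0.le, show 2 * x ^ (1 / α) - x ^ (1 / α) = x ^ (1 / α) by ring,
    e1, ← hr]
  intro heq
  have hrx : r * x ≤ 2 * x := mul_le_mul_of_nonneg_right hr2.le hx0.le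
  have hb1 := (ml_bounds α h0 M hM x hx0.le (by linarith)).1
  have hb2 := (ml_bounds α h0 M hM (r * x) (by positivity) (by linarith)).2
  rw [div_eq_mul_one_div, ← hc] at hb1 hb2
  have hcx : 0 < x * c := by positivity
  have h3 : (1 + x * c) * (1 + x * c) ≤ mlE α x * mlE α x :=
    mul_self_le_mul_self (by linarith) hb1
  have h4 : (r * x) ^ 2 ≤ (2 * x) ^ 2 := by gcongr
  have h5 : 2 * M * (r * x) ^ 2 ≤ 2 * M * (2 * x) ^ 2 := by gcongr
  have h6 : x * ((2 - r) * c) ≤ x * (8 * M * x) := by nlinarith [mul_pos hcx hcx]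
  have h7 := le_of_mul_le_mul_left h6 hx0
  linarith
end
end
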